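/- arXiv:0908.2750 — 3 statements merged into one kernel-verified Lean document; each statement's English description precedes it below -/
import Mathlib

section
/- Let n = 2k+1 be odd with n ≥ 2r+3 and suppose gcd(2r+1, 2k+1) ≠ 1. Then the minimum size of an r-identifying code in the cycle C_{2k+1} equals gcd(2r+1, 2k+1) · ⌈(2k+1) / (2·gcd(2r+1, 2k+1))⌉. -/
/-- `Dr G r D x` = `N_r[x] ∩ D`. -/
def Dr {V : Type*} (G : SimpleGraph V) (r : ℕ) (D : Set V) (x : V) : Set V :=
  {y | y ∈ D ∧ G.dist x y ≤ r}

/-- `D` is an `r`-identifying code of `G`. -/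
def IsIdCode {V : Type*} (G : SimpleGraph V) (r : ℕ) (D : Set V) : Prop :=
  (∀ x, (Dr G r D x).Nonempty) ∧ ∀ x y, x ≠ y → Dr G r D x ≠ Dr G r D y

/-- `D` is an `r`-locating-dominating set of `G`. -/
def IsLD {V : Type*} (G : SimpleGraph V) (r : ℕ) (D : Set V) : Prop :=
  (∀ x ∉ D, (Dr G r D x).Nonempty) ∧
    ∀ x ∉ D, ∀ y ∉ D, x ≠ y → Dr G r D x ≠ Dr G r D y

/-- The cycle graph on `ZMod n`. -/
def cycleG (n : ℕ) : SimpleGraph (ZMod n) :=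
  SimpleGraph.fromRel (fun x y => x - y = 1)

lemma cyc_dist_le (n : ℕ) [NeZero n] (h2 : 2 ≤ n) (r : ℕ) (x z : ZMod n) :
    (cycleG n).dist x z ≤ r ↔ ∃ t : ℤ, -(r:ℤ) ≤ t ∧ t ≤ r ∧ z = x + (t : ZMod n) := by
  have : Fact (1 < n) := ⟨h2⟩
  have adj : ∀ x : ZMod n, (cycleG n).Adj x (x+1) := by
    intro x
    simp [cycleG, SimpleGraph.fromRel_adj]
  have walkN : ∀ (t : ℕ) (x : ZMod n), ∃ p : (cycleG n).Walk x (x + (t : ZMod n)), p.length = t := by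
    intro t
    induction t with
    | zero => intro x; exact ⟨SimpleGraph.Walk.nil.copy rfl (by simp), by simp⟩
    | succ t ih =>
      intro x
      obtain ⟨p, hp⟩ := ih (x+1)
      exact ⟨(SimpleGraph.Walk.cons (adj x) p).copy rfl (by push_cast; ring), by simp [hp]⟩
  have key : ∀ (x z : ZMod n) (p : (cycleG n).Walk x z),
      ∃ t : ℤ, -(p.length:ℤ) ≤ t ∧ t ≤ p.length ∧ z = x + (t : ZMod n) := by
    intro x z p
    induction p with
    | nil => exact ⟨0, by simp⟩
    | cons h p ih =>
      obtain ⟨t, h1, h2, h3⟩ := ih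
      simp only [cycleG, SimpleGraph.fromRel_adj] at h
      simp only [SimpleGraph.Walk.length_cons]
      rcases h with ⟨_, h | h⟩
      · refine ⟨t - 1, by push_cast; omega, by push_cast; omega, ?_⟩
        rw [h3]; push_cast; linear_combination -h
      · refine ⟨t + 1, by push_cast; omega, by push_cast; omega, ?_⟩
        rw [h3]; push_cast; linear_combination h
  constructor
  · intro h
    have hreach : (cycleG n).Reachable x z := by
      obtain ⟨p, _⟩ := walkN (z - x).val x
      exact ⟨p.copy rfl (by simp)⟩
    obtain ⟨p, hp⟩ := hreach.exists_walk_length_eq_dist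
    obtain ⟨t, h1, h2, h3⟩ := key x z p
    exact ⟨t, by omega, by omega, h3⟩
  · rintro ⟨t, h1, h2, h3⟩
    rcases Int.eq_nat_or_neg t with ⟨m, rfl | rfl⟩
    · obtain ⟨p, hp⟩ := walkN m x
      subst h3
      have := (cycleG n).dist_le (p.copy rfl (by simp : _ = x + ((m:ℤ) : ZMod n)))
      simp only [SimpleGraph.Walk.length_copy] at this
      omega
    · obtain ⟨p, hp⟩ := walkN m z
      have := (cycleG n).dist_le (p.copy rfl (by rw [h3]; push_cast; ring : _ = x))
      simp only [SimpleGraph.Walk.length_copy] at this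
      rw [SimpleGraph.dist_comm]
      omega

lemma val_sub_cases (n : ℕ) [NeZero n] (u t : ZMod n) :
    (t.val ≤ u.val ∧ (u - t).val = u.val - t.val) ∨
    (u.val < t.val ∧ (u - t).val = u.val + n - t.val) := by
  have hu := ZMod.val_lt u
  have ht := ZMod.val_lt t
  rcases le_or_gt t.val u.val with h | h
  · exact Or.inl ⟨h, ZMod.val_sub h⟩
  · refine Or.inr ⟨h, ?_⟩
    have : u - t = ((u.val + n - t.val : ℕ) : ZMod n) := by
      rw [Nat.cast_sub (by omega)]; simp
    rw [this, ZMod.val_natCast, Nat.mod_eq_of_lt (by omega)]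

lemma cyc_dist_val (n : ℕ) [NeZero n] (r : ℕ) (h2 : 2*r+3 ≤ n) (x z : ZMod n) :
    (cycleG n).dist x z ≤ r ↔ (z - (x - (r : ZMod n))).val < 2*r+1 := by
  rw [cyc_dist_le n (by omega)]
  constructor
  · rintro ⟨t, h1, h2', rfl⟩
    obtain ⟨m, hm⟩ := Int.eq_ofNat_of_zero_le (by omega : 0 ≤ t + r)
    have : x + (t : ZMod n) - (x - (r : ZMod n)) = ((m : ℕ) : ZMod n) := by
      have := congrArg (Int.cast : ℤ → ZMod n) hm
      push_cast at this
      linear_combination this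
    rw [this, ZMod.val_natCast, Nat.mod_eq_of_lt (by omega)]
    omega
  · intro h
    refine ⟨((z - (x - (r : ZMod n))).val : ℤ) - r, by omega, by omega, ?_⟩
    push_cast
    simp only [ZMod.natCast_val, ZMod.cast_id', id]
    ring

lemma cyc_cover (n : ℕ) [NeZero n] (r : ℕ) (h2 : 2*r+3 ≤ n) (D : Set (ZMod n))
    (hD : IsIdCode (cycleG n) r D) (y : ZMod n) : y ∈ D ∨ y + ((2*r+1 : ℕ) : ZMod n) ∈ D := by
  have : Fact (1 < n) := ⟨by omega⟩
  by_contra! hc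
  obtain ⟨h0, hq⟩ := hc
  refine hD.2 (y + (r : ZMod n)) (y + (r : ZMod n) + 1) (by simp) ?_
  ext z
  simp only [Dr, Set.mem_setOf_eq, cyc_dist_val n r h2]
  refine and_congr_right fun hz => ?_
  have e1 : z - (y + (r : ZMod n) - r) = z - y := by ring
  have e2 : z - (y + (r : ZMod n) + 1 - r) = z - y - 1 := by ring
  rw [e1, e2]
  have hv := val_sub_cases n (z - y) 1
  rw [ZMod.val_one n] at hv
  have a0 : (z - y).val ≠ 0 := by
    intro h
    rw [ZMod.val_eq_zero, sub_eq_zero] at h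
    exact h0 (h ▸ hz)
  have aq : (z - y).val ≠ 2*r+1 := by
    intro h
    apply hq
    rw [← h]
    simpa using hz
  omega

lemma cyc_code (n : ℕ) [NeZero n] (r g : ℕ) (h2 : 2*r+3 ≤ n) (D : Set (ZMod n))
    (hgq : g ≤ 2*r+1) (hgc : g + (2*r+1) ≤ n)
    (hcov : ∀ y, y ∈ D ∨ y + ((2*r+1 : ℕ) : ZMod n) ∈ D)
    (hwin : ∀ y : ZMod n, ∃ t : ℕ, t < g ∧ y + (t : ZMod n) ∈ D) :
    IsIdCode (cycleG n) r D := by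
  have hval : ∀ (w : ZMod n) (a : ℕ), a < n → (w + (a : ZMod n) - w).val = a := by
    intro w a ha
    rw [add_sub_cancel_left, ZMod.val_natCast, Nat.mod_eq_of_lt ha]
  constructor
  · intro x
    obtain ⟨t, ht, hD⟩ := hwin (x - (r : ZMod n))
    refine ⟨_, hD, ?_⟩
    rw [cyc_dist_val n r h2, hval _ _ (by omega)]
    omega
  · intro x y hxy heq
    have hiff : ∀ z ∈ D, ((z - (x - (r : ZMod n))).val < 2*r+1 ↔
        (z - (x - (r : ZMod n)) - (y - x)).val < 2*r+1) := by
      intro z hz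
      have := Set.ext_iff.1 heq z
      simp only [Dr, Set.mem_setOf_eq, cyc_dist_val n r h2, hz, true_and] at this
      rw [this]
      have e : z - (y - (r : ZMod n)) = z - (x - (r : ZMod n)) - (y - x) := by ring
      rw [e]
    have key : ∀ a : ℕ, a < n → (x - (r : ZMod n)) + (a : ZMod n) ∈ D →
        (a < 2*r+1 ↔ ((y - x).val ≤ a ∧ a - (y - x).val < 2*r+1 ∨
          a < (y-x).val ∧ a + n - (y-x).val < 2*r+1)) := by
      intro a ha hD
      have h := hiff _ hD
      have hv := val_sub_cases n ((x - (r : ZMod n)) + (a : ZMod n) - (x - (r : ZMod n))) (y - x)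
      rw [hval _ _ ha] at h hv
      omega
    have ht0 : (y - x).val ≠ 0 := by
      intro h
      rw [ZMod.val_eq_zero, sub_eq_zero] at h
      exact hxy h.symm
    have htn := ZMod.val_lt (y - x)
    by_cases hc : (y-x).val + (2*r+1) ≤ n
    · by_cases hq : (y-x).val ≤ 2*r+1
      · rcases hcov (x - (r : ZMod n)) with h | h
        · have := key 0 (by omega) (by simpa using h)
          omega
        · have := key (2*r+1) (by omega) h
          omega
      · obtain ⟨t, ht, hD⟩ := hwin (x - (r : ZMod n))
        have := key t (by omega) hD
        omega
    · by_cases hq : (y-x).val ≤ 2*r+1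
      · obtain ⟨t, ht, hD⟩ := hwin (x - (r : ZMod n) + ((2*r+1 : ℕ) : ZMod n))
        have := key (2*r+1+t) (by omega) (by push_cast at hD ⊢; rwa [← add_assoc])
        omega
      · rcases hcov (x - (r : ZMod n) + (((y-x).val : ℕ) : ZMod n)) with h | h
        · have := key (y-x).val (by omega) h
          omega
        · have := key ((y-x).val + (2*r+1) - n) (by omega) (by
            rw [Nat.cast_sub (by omega)]
            rw [add_assoc] at h
            push_cast at h ⊢
            simpa using h)
          omega

lemma cyc_lower (n : ℕ) [NeZero n] (g s q : ℕ) (hg : 0 < g) (hn : n = g * (2*s+1)) (hq : g ∣ q)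
    (D : Set (ZMod n)) (hcov : ∀ y, y ∈ D ∨ y + (q : ZMod n) ∈ D) :
    g * (s+1) ≤ D.ncard := by
  classical
  have hdvd : g ∣ n := ⟨_, hn⟩
  have : NeZero g := ⟨by omega⟩
  let φ := ZMod.castHom hdvd (ZMod g)
  have hφq : φ (q : ZMod n) = 0 := by
    rw [map_natCast]; exact (ZMod.natCast_eq_zero_iff _ _).2 hq
  let E : Finset (ZMod n) := Finset.univ.filter (· ∈ D)
  have hE : D.ncard = E.card := by
    rw [← Set.ncard_coe_finset]; congr 1; ext; simp [E]
  rw [hE]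
  have hfib : ∀ i ∈ (Finset.univ : Finset (ZMod g)), s + 1 ≤ (E.filter (fun y => φ y = i)).card := by
    intro i _
    have h1 : 2*s+1 ≤ (Finset.univ.filter (fun y : ZMod n => φ y = i)).card := by
      have : ((Finset.range (2*s+1)).image (fun t => ((i.val + g*t : ℕ) : ZMod n))).card = 2*s+1 := by
        rw [Finset.card_image_of_injOn, Finset.card_range]
        intro a ha b hb hab
        have hlt : ∀ a ∈ Finset.range (2*s+1), i.val + g*a < n := by
          intro a ha
          have := ZMod.val_lt i
          have h3 : a + 1 ≤ 2*s+1 := by simpa using ha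
          have := Nat.mul_le_mul_left g h3
          rw [mul_add] at this
          omega
        have := congrArg ZMod.val hab
        simp only [ZMod.val_natCast] at this
        rw [Nat.mod_eq_of_lt (hlt a (by simpa using ha)), Nat.mod_eq_of_lt (hlt b (by simpa using hb))] at this
        exact Nat.eq_of_mul_eq_mul_left hg (by omega)
      rw [← this]
      apply Finset.card_le_card
      intro y hy
      simp only [Finset.mem_image] at hy
      obtain ⟨t, _, rfl⟩ := hy
      simp only [Finset.mem_filter, Finset.mem_univ, true_and, map_natCast]
      simp
    have h2 : (Finset.univ.filter (fun y : ZMod n => φ y = i)) ⊆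
        (E.filter (fun y => φ y = i)) ∪ (E.filter (fun y => φ y = i)).image (fun y => y - (q : ZMod n)) := by
      intro y hy
      simp only [Finset.mem_filter, Finset.mem_univ, true_and] at hy
      rcases hcov y with h | h
      · exact Finset.mem_union_left _ (by simp [E, h, hy])
      · refine Finset.mem_union_right _ (Finset.mem_image.2 ⟨y + q, ?_, by ring⟩)
        simp only [Finset.mem_filter, E, Finset.mem_univ, true_and]
        exact ⟨h, by rw [map_add, hφq, hy, add_zero]⟩
    have h3 := Finset.card_le_card h2
    have h4 := Finset.card_union_le (E.filter (fun y => φ y = i))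
      ((E.filter (fun y => φ y = i)).image (fun y => y - (q : ZMod n)))
    have h5 : ((E.filter (fun y => φ y = i)).image (fun y => y - (q : ZMod n))).card ≤ _ :=
      Finset.card_image_le
    omega
  have h := Finset.card_nsmul_le_sum Finset.univ (fun i => (E.filter (fun y => φ y = i)).card) (s+1) hfib
  rw [← Finset.card_eq_sum_card_fiberwise (fun _ _ => Finset.mem_univ _)] at h
  simpa [ZMod.card] using h

lemma cyc_rep (n : ℕ) [NeZero n] (m q : ℕ) (hm : 0 < m) (hn : n = Nat.gcd q n * m) (y : ZMod n) :
    ∃ i j : ℕ, i < Nat.gcd q n ∧ j < m ∧ y = (i : ZMod n) + (q : ZMod n) * (j : ZMod n) := by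
  have hg : 0 < Nat.gcd q n := Nat.gcd_pos_of_pos_right _ (Nat.pos_of_ne_zero (NeZero.ne n))
  have hqm : (q : ZMod n) * (m : ZMod n) = 0 := by
    obtain ⟨c, hc⟩ := Nat.gcd_dvd_left q n
    have : q * m = c * n := by
      calc q * m = (Nat.gcd q n * c) * m := by rw [← hc]
        _ = c * (Nat.gcd q n * m) := by ring
        _ = c * n := by rw [← hn]
    rw [← Nat.cast_mul, this]; simp
  let J : ℤ := Nat.gcdA q n * (y.val / Nat.gcd q n : ℕ)
  have hmz : (0:ℤ) < m := by exact_mod_cast hm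
  have hJ0 := Int.emod_nonneg J hmz.ne'
  have hJ1 := Int.emod_lt_of_pos J hmz
  obtain ⟨j, hj⟩ := Int.eq_ofNat_of_zero_le hJ0
  refine ⟨y.val % Nat.gcd q n, j, Nat.mod_lt _ hg, by omega, ?_⟩
  have h1 : (Nat.gcd q n : ZMod n) = q * (Nat.gcdA q n : ZMod n) := by
    have := congrArg (Int.cast : ℤ → ZMod n) (Nat.gcd_eq_gcd_ab q n)
    push_cast at this
    simpa using this
  have h2 : (J : ZMod n) = j + m * ((J / m : ℤ) : ZMod n) := by
    have := congrArg (Int.cast : ℤ → ZMod n) (Int.emod_add_mul_ediv J m)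
    rw [hj] at this
    push_cast at this
    exact this.symm
  have h3 : y = ((y.val % Nat.gcd q n + Nat.gcd q n * (y.val / Nat.gcd q n) : ℕ) : ZMod n) := by
    rw [Nat.mod_add_div]; simp
  have h4 : (J : ZMod n) = (Nat.gcdA q n : ZMod n) * ((y.val / Nat.gcd q n : ℕ) : ZMod n) := by
    simp only [J]; rw [Int.cast_mul, Int.cast_natCast]
  conv_lhs => rw [h3]
  rw [Nat.cast_add, Nat.cast_mul, h1, mul_assoc, ← h4, h2]
  linear_combination ((J / m : ℤ) : ZMod n) * hqm

lemma cyc_construct (n : ℕ) [NeZero n] (s q : ℕ) (hn : n = Nat.gcd q n * (2*s+1))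
    (hg3 : 3 ≤ Nat.gcd q n) :
    ∃ D : Set (ZMod n), D.ncard ≤ Nat.gcd q n * (s+1) ∧
      (∀ y, y ∈ D ∨ y + (q : ZMod n) ∈ D) ∧
      ∀ y : ZMod n, ∃ t : ℕ, t < Nat.gcd q n ∧ y + (t : ZMod n) ∈ D := by
  classical
  let f : ℕ × ℕ → ZMod n := fun p =>
    (p.1 : ZMod n) + (if p.1 = 1 then (q : ZMod n) else 0) + (q : ZMod n) * (2 * (p.2 : ZMod n))
  let F : Finset (ZMod n) := (Finset.range (Nat.gcd q n) ×ˢ Finset.range (s+1)).image f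
  have memF : ∀ i l : ℕ, i < Nat.gcd q n → l < s+1 → f (i, l) ∈ F := by
    intro i l hi hl
    exact Finset.mem_image.2 ⟨(i,l), by simp [hi]; omega, rfl⟩
  have memE : ∀ i j : ℕ, i < Nat.gcd q n → i ≠ 1 → j < 2*s+1 → Even j →
      (i : ZMod n) + (q : ZMod n) * (j : ZMod n) ∈ F := by
    rintro i j hi h1 hj ⟨l, rfl⟩
    have := memF i l hi (by omega)
    simp only [f, h1, if_false] at this
    convert this using 1
    push_cast; ring
  have memO : ∀ j : ℕ, j < 2*s+2 → ¬ Even j →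
      1 + (q : ZMod n) * (j : ZMod n) ∈ F := by
    intro j hj ho
    obtain ⟨l, rfl⟩ := Nat.not_even_iff_odd.1 ho
    have := memF 1 l (by omega) (by omega)
    simp only [f, if_true] at this
    convert this using 1
    push_cast; ring
  have rep := cyc_rep n (2*s+1) q (by omega) hn
  refine ⟨↑F, ?_, ?_, ?_⟩
  · rw [Set.ncard_coe_finset]
    refine Finset.card_image_le.trans ?_
    simp
  · intro y
    simp only [Finset.mem_coe]
    obtain ⟨i, j, hi, hj, hy⟩ := rep y
    by_cases h1 : i = 1
    · obtain ⟨i', j', hi', hj', hy'⟩ := rep (y - q)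
      subst h1
      by_cases he : Even j
      · right
        have := memO (j+1) (by omega) (by simpa [Nat.even_add_one] using he)
        rw [hy]
        convert this using 1
        push_cast; ring
      · left
        have := memO j (by omega) he
        rw [hy]; simpa using this
    · by_cases he : Even j
      · left; rw [hy]; exact memE i j hi h1 hj he
      · right
        have hj2 : j + 1 < 2*s+1 := by
          have : j ≠ 2*s := by rintro rfl; simp at he
          omega
        have := memE i (j+1) hi h1 hj2 (by simpa [Nat.even_add_one] using he)
        rw [hy]
        convert this using 1
        push_cast; ring
  · have zero : ∀ (y : ZMod n) (j : ℕ), j < 2*s+1 → y = (q : ZMod n) * (j : ZMod n) →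
        y ∈ F ∨ y + 1 ∈ F := by
      intro y j hj hy
      by_cases he : Even j
      · left; have := memE 0 j (by omega) (by omega) hj he
        rw [hy]; simpa using this
      · right; have := memO j (by omega) he
        rw [hy, add_comm]; exact this
    intro y
    simp only [Finset.mem_coe]
    obtain ⟨i, j, hi, hj, hy⟩ := rep y
    by_cases h0 : i = 0
    · subst h0
      rcases zero y j hj (by simpa using hy) with h | h
      · exact ⟨0, by omega, by simpa using h⟩
      · exact ⟨1, by omega, by simpa using h⟩
    by_cases h1 : i = 1
    · subst h1
      by_cases he : Even j
      · refine ⟨1, by omega, ?_⟩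
        have := memE 2 j (by omega) (by omega) hj he
        rw [hy]
        convert this using 1
        push_cast; ring
      · refine ⟨0, by omega, ?_⟩
        have := memO j (by omega) he
        rw [hy]; simpa using this
    · obtain ⟨i', j', hi', hj', hy'⟩ := rep (y + ((Nat.gcd q n - i : ℕ) : ZMod n))
      have hi0 : i' = 0 := by
        have hd : Nat.gcd q n ∣ n := Nat.gcd_dvd_right _ _
        have e1 := congrArg (ZMod.castHom hd (ZMod (Nat.gcd q n))) hy'
        have hq0 : (q : ZMod (Nat.gcd q n)) = 0 :=
          (ZMod.natCast_eq_zero_iff _ _).2 (Nat.gcd_dvd_left _ _)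
        rw [hy, Nat.cast_sub hi.le] at e1
        simp only [map_add, map_mul, map_sub, map_natCast, hq0, zero_mul, add_zero] at e1
        rw [ZMod.natCast_self] at e1
        have e2 : (i' : ZMod (Nat.gcd q n)) = 0 := by rw [← e1]; ring
        rw [ZMod.natCast_eq_zero_iff] at e2
        exact Nat.eq_zero_of_dvd_of_lt e2 hi'
      subst hi0
      rcases zero _ j' hj' (by simpa using hy') with h | h
      · exact ⟨_, by omega, h⟩
      · refine ⟨Nat.gcd q n - i + 1, by omega, ?_⟩
        rw [Nat.cast_add, ← add_assoc]; simpa using h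

theorem stmt4 (r k : ℕ) (hr : 1 ≤ r) (hn : 2*r+3 ≤ 2*k+1)
    (hg : Nat.gcd (2*r+1) (2*k+1) ≠ 1) :
    IsLeast {m | ∃ D : Set (ZMod (2*k+1)),
        IsIdCode (cycleG (2*k+1)) r D ∧ D.ncard = m}
      (Nat.gcd (2*r+1) (2*k+1) *
        ((2*k+1 + (2 * Nat.gcd (2*r+1) (2*k+1) - 1)) /
          (2 * Nat.gcd (2*r+1) (2*k+1)))) := by
  have hd1 := Nat.gcd_dvd_left (2*r+1) (2*k+1)
  have hd2 := Nat.gcd_dvd_right (2*r+1) (2*k+1)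
  have hpos : 0 < Nat.gcd (2*r+1) (2*k+1) := Nat.gcd_pos_of_pos_left _ (by omega)
  have hodd : Odd (Nat.gcd (2*r+1) (2*k+1)) := Odd.of_dvd_nat ⟨r, rfl⟩ hd1
  have hg3 : 3 ≤ Nat.gcd (2*r+1) (2*k+1) := by
    obtain ⟨a, ha⟩ := hodd
    omega
  obtain ⟨m, hm⟩ := hd2
  have hmodd : Odd m := Odd.of_dvd_nat (⟨k, rfl⟩ : Odd (2*k+1)) (Dvd.intro_left _ hm.symm)
  obtain ⟨s, rfl⟩ := hmodd
  have hdiv : (2*k+1 + (2 * Nat.gcd (2*r+1) (2*k+1) - 1)) / (2 * Nat.gcd (2*r+1) (2*k+1)) = s+1 := by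
    have e : 2*k+1 + (2 * Nat.gcd (2*r+1) (2*k+1) - 1) =
        (Nat.gcd (2*r+1) (2*k+1) - 1) + (2 * Nat.gcd (2*r+1) (2*k+1)) * (s+1) := by
      have : (2 * Nat.gcd (2*r+1) (2*k+1)) * (s+1) + Nat.gcd (2*r+1) (2*k+1) =
        Nat.gcd (2*r+1) (2*k+1) * (2*s+1) + 2 * Nat.gcd (2*r+1) (2*k+1) := by ring
      omega
    rw [e, Nat.add_mul_div_left _ _ (by omega), Nat.div_eq_of_lt (by omega)]
    omega
  rw [hdiv]
  have lower : ∀ D : Set (ZMod (2*k+1)), (∀ y, y ∈ D ∨ y + ((2*r+1 : ℕ) : ZMod (2*k+1)) ∈ D) →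
      Nat.gcd (2*r+1) (2*k+1) * (s+1) ≤ D.ncard :=
    fun D hD => cyc_lower (2*k+1) _ s (2*r+1) hpos hm hd1 D hD
  constructor
  · obtain ⟨D, hc, hcov, hwin⟩ := cyc_construct (2*k+1) s (2*r+1) hm hg3
    refine ⟨D, cyc_code (2*k+1) r _ hn D (Nat.le_of_dvd (by omega) hd1) ?_ hcov hwin,
      le_antisymm hc (lower D hcov)⟩
    have : Nat.gcd (2*r+1) (2*k+1) ∣ 2*k+1 - (2*r+1) :=
      Nat.dvd_sub (Nat.gcd_dvd_right _ _) hd1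
    have := Nat.le_of_dvd (by omega) this
    omega
  · rintro _ ⟨D, hD, rfl⟩
    exact lower D (cyc_cover (2*k+1) r hn D hD)
end

section
/- Let n = 2k+1 with k = (2r+1)p + q, p ≥ 1, q ∈ {0, 2r}, and gcd(2r+1, 2k+1) = 1. Then the minimum size of an r-identifying code in the cycle C_{2k+1} is k+2. -/
theorem aux_walk_le {n : ℕ} {x y : ZMod n} (w : (cycleG n).Walk x y) :
    ∀ r : ℕ, w.length ≤ r → ∃ t : ℕ, t ≤ 2 * r ∧ y + (r : ZMod n) = x + (t : ZMod n) := by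
  induction w with
  | nil => intro r _; exact ⟨r, by omega, rfl⟩
  | @cons u v z h w ih =>
    intro r hr
    rw [SimpleGraph.Walk.length_cons] at hr
    obtain ⟨r', rfl⟩ : ∃ r', r = r' + 1 := ⟨r - 1, by omega⟩
    obtain ⟨t, ht, e⟩ := ih r' (by omega)
    have h' : u ≠ v ∧ (u - v = 1 ∨ v - u = 1) := by
      simpa [cycleG, SimpleGraph.fromRel_adj] using h
    rcases h'.2 with h1 | h1
    · refine ⟨t, by omega, ?_⟩
      push_cast
      linear_combination e - h1
    · refine ⟨t + 2, by omega, ?_⟩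
      push_cast
      linear_combination e + h1

theorem aux_walk_up {n : ℕ} (hn : 1 < n) (x : ZMod n) (m : ℕ) :
    ∃ w : (cycleG n).Walk x (x + (m : ZMod n)), w.length = m := by
  have : Fact (1 < n) := ⟨hn⟩
  induction m with
  | zero => exact ⟨(SimpleGraph.Walk.nil : (cycleG n).Walk x x).copy rfl (by simp), by simp⟩
  | succ m ih =>
    obtain ⟨w, hw⟩ := ih
    have ha : (cycleG n).Adj (x + (m : ZMod n)) (x + ((m + 1 : ℕ) : ZMod n)) := by
      rw [cycleG, SimpleGraph.fromRel_adj]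
      refine ⟨?_, Or.inr (by push_cast; ring)⟩
      intro h
      have : (1 : ZMod n) = 0 := by
        push_cast at h
        linear_combination -h
      exact one_ne_zero this
    exact ⟨w.concat ha, by rw [SimpleGraph.Walk.length_concat, hw]⟩

theorem aux_dist_iff {n : ℕ} (hn : 1 < n) (x y : ZMod n) (r : ℕ) :
    (cycleG n).dist x y ≤ r ↔ ∃ t : ℕ, t ≤ 2 * r ∧ y + (r : ZMod n) = x + (t : ZMod n) := by
  have : NeZero n := ⟨by omega⟩
  constructor
  · intro h
    have hreach : (cycleG n).Reachable x y := by
      obtain ⟨w, _⟩ := aux_walk_up hn x (y - x).val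
      exact ⟨w.copy rfl (by simp)⟩
    obtain ⟨w, hw⟩ := hreach.exists_walk_length_eq_dist
    exact aux_walk_le w r (by omega)
  · rintro ⟨t, ht, e⟩
    rcases le_total r t with h | h
    · obtain ⟨m, rfl⟩ := Nat.exists_eq_add_of_le h
      obtain ⟨w, hw⟩ := aux_walk_up hn x m
      have hy : y = x + (m : ZMod n) := by
        push_cast at e
        linear_combination e
      rw [hy]
      exact (SimpleGraph.dist_le w).trans (by omega)
    · obtain ⟨m, rfl⟩ := Nat.exists_eq_add_of_le h
      obtain ⟨w, hw⟩ := aux_walk_up hn y m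
      have hy : x = y + (m : ZMod n) := by
        push_cast at e
        linear_combination -e
      rw [SimpleGraph.dist_comm, hy]
      exact (SimpleGraph.dist_le w).trans (by omega)

theorem aux_mem_Dr {n : ℕ} (hn : 1 < n) (D : Set (ZMod n)) (x y : ZMod n) (r : ℕ) :
    y ∈ Dr (cycleG n) r D x ↔
      y ∈ D ∧ ∃ t : ℕ, t ≤ 2 * r ∧ y + (r : ZMod n) = x + (t : ZMod n) := by
  rw [← aux_dist_iff hn]; rfl

/-- Consecutive windows differ: one of `z`, `z + (2r+1)` is in the code. -/
theorem aux_cover {n : ℕ} (hn : 1 < n) (r : ℕ) (D : Set (ZMod n))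
    (h : IsIdCode (cycleG n) r D) (z : ZMod n) (hz : z ∉ D) :
    z + ((2 * r + 1 : ℕ) : ZMod n) ∈ D := by
  have : Fact (1 < n) := ⟨hn⟩
  by_contra hz2
  have hne : z + (r : ZMod n) ≠ z + (r : ZMod n) + 1 := by
    intro h
    exact one_ne_zero (α := ZMod n) (by linear_combination -h)
  apply h.2 _ _ hne
  ext y
  rw [aux_mem_Dr hn, aux_mem_Dr hn]
  refine and_congr_right fun hy => ?_
  constructor
  · rintro ⟨t, ht, e⟩
    rcases t with _ | t
    · exfalso; apply hz
      have : y = z := by push_cast at e; linear_combination e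
      rwa [← this]
    · exact ⟨t, by omega, by push_cast at e; linear_combination e⟩
  · rintro ⟨t, ht, e⟩
    rcases Nat.lt_or_ge t (2 * r) with h' | h'
    · exact ⟨t + 1, by omega, by push_cast; linear_combination e⟩
    · exfalso; apply hz2
      have ht' : t = 2 * r := by omega
      subst ht'
      have : z + ((2 * r + 1 : ℕ) : ZMod n) = y := by
        push_cast at e ⊢; linear_combination -e
      rwa [this]

theorem aux_cast_ne {n : ℕ} (m : ℕ) (h1 : 0 < m) (h2 : m < n) : (m : ZMod n) ≠ 0 := by
  intro h
  rw [ZMod.natCast_eq_zero_iff] at h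
  exact absurd (Nat.le_of_dvd h1 h) (by omega)

theorem aux_suff_half {n : ℕ} (r : ℕ) (hn : 4 * r + 2 < n) (D : Set (ZMod n))
    (hc : ∀ z, z ∉ D → z + ((2 * r + 1 : ℕ) : ZMod n) ∈ D)
    (x : ZMod n) (d : ℕ) (hd : 1 ≤ d) (hd2 : d ≤ 2 * r)
    (h : Dr (cycleG n) r D x = Dr (cycleG n) r D (x + (d : ZMod n))) : False := by
  have hn1 : 1 < n := by omega
  by_cases hz : x - (r : ZMod n) ∈ D
  · have h1 : x - (r : ZMod n) ∈ Dr (cycleG n) r D x := by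
      rw [aux_mem_Dr hn1]; exact ⟨hz, 0, by omega, by simp⟩
    rw [h, aux_mem_Dr hn1] at h1
    obtain ⟨_, t, ht, e⟩ := h1
    apply aux_cast_ne (n := n) (d + t) (by omega) (by omega)
    push_cast
    linear_combination -e
  · have hz2 := hc _ hz
    have h1 : x - (r : ZMod n) + ((2 * r + 1 : ℕ) : ZMod n) ∈
        Dr (cycleG n) r D (x + (d : ZMod n)) := by
      rw [aux_mem_Dr hn1]
      refine ⟨hz2, 2 * r + 1 - d, by omega, ?_⟩
      rw [Nat.cast_sub (by omega)]
      ring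
    rw [← h, aux_mem_Dr hn1] at h1
    obtain ⟨_, t, ht, e⟩ := h1
    apply aux_cast_ne (n := n) (2 * r + 1 - t) (by omega) (by omega)
    rw [Nat.cast_sub (by omega)]
    linear_combination e

theorem aux_suff {n : ℕ} (r : ℕ) (hn : 4 * r + 2 < n) (D : Set (ZMod n))
    (hc : ∀ z, z ∉ D → z + ((2 * r + 1 : ℕ) : ZMod n) ∈ D)
    (hw : ∀ z, ∃ t : ℕ, t ≤ 2 * r ∧ z + (t : ZMod n) ∈ D) :
    IsIdCode (cycleG n) r D := by
  have hn1 : 1 < n := by omega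
  have hne : ∀ x, (Dr (cycleG n) r D x).Nonempty := by
    intro x
    obtain ⟨t, ht, h⟩ := hw (x - (r : ZMod n))
    exact ⟨_, (aux_mem_Dr hn1 D x _ r).2 ⟨h, t, ht, by ring⟩⟩
  refine ⟨hne, fun x y hxy h => ?_⟩
  obtain ⟨z, hz⟩ := hne x
  have hz2 := hz
  rw [h] at hz2
  rw [aux_mem_Dr hn1] at hz hz2
  obtain ⟨_, t, ht, e⟩ := hz
  obtain ⟨_, t', ht', e'⟩ := hz2
  rcases lt_trichotomy t t' with hlt | heq | hlt
  · obtain ⟨d, rfl⟩ := Nat.exists_eq_add_of_lt hlt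
    have : x = y + ((d + 1 : ℕ) : ZMod n) := by
      push_cast at e' ⊢
      linear_combination e' - e
    rw [this] at h
    exact aux_suff_half r hn D hc y (d + 1) (by omega) (by omega) h.symm
  · subst heq
    exact hxy (by linear_combination e' - e)
  · obtain ⟨d, rfl⟩ := Nat.exists_eq_add_of_lt hlt
    have : y = x + ((d + 1 : ℕ) : ZMod n) := by
      push_cast at e ⊢
      linear_combination e - e'
    rw [this] at h
    exact aux_suff_half r hn D hc x (d + 1) (by omega) (by omega) h

/-- Structure of a cover of size at most `k + 1`. -/
theorem aux_struct (s k n : ℕ) (hn : n = 2 * k + 1) (hg : Nat.gcd s n = 1) (D : Set (ZMod n))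
    (hc : ∀ z, z ∉ D → z + (s : ZMod n) ∈ D) (hD : D.ncard ≤ k + 1) :
    ∃ z0 : ZMod n, ∀ i : ℕ, 2 * i + 1 < n →
      z0 + ((2 * i + 1 : ℕ) : ZMod n) * (s : ZMod n) ∉ D := by
  classical
  have : NeZero n := ⟨by omega⟩
  let U : Finset (ZMod n) := Finset.univ.filter (fun z => z ∉ D)
  let E : Finset (ZMod n) := Finset.univ.filter (fun z => z ∈ D)
  have hE : E.card = D.ncard := by
    rw [Set.ncard_eq_toFinset_card']
    congr 1
    ext z; simp [E]
  have hUE : E.card + U.card = n := by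
    have := Finset.card_filter_add_card_filter_not (s := (Finset.univ : Finset (ZMod n)))
      (fun z => z ∈ D)
    rw [Finset.card_univ, ZMod.card] at this
    exact this
  let V : Finset (ZMod n) := U.image (fun z => z + (s : ZMod n))
  have hV : V.card = U.card := Finset.card_image_of_injective _ (add_left_injective _)
  have hdisj : Disjoint U V := by
    rw [Finset.disjoint_left]
    intro z hz hz'
    simp only [V, U, Finset.mem_image, Finset.mem_filter, Finset.mem_univ, true_and] at hz hz'
    obtain ⟨w, hw, rfl⟩ := hz'
    exact hz (hc w hw)
  have hUV : (U ∪ V).card = 2 * U.card := by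
    rw [Finset.card_union_of_disjoint hdisj, hV]; ring
  have hcompl : (U ∪ V)ᶜ.card ≤ 1 ∧ 1 ≤ (U ∪ V)ᶜ.card := by
    have h1 := Finset.card_compl_add_card (U ∪ V)
    rw [Fintype.card, Finset.card_univ, ZMod.card] at h1
    omega
  obtain ⟨z0, hz0⟩ := Finset.card_eq_one.1 (le_antisymm hcompl.1 hcompl.2)
  have key : ∀ z, z ≠ z0 → z ∈ D → z - (s : ZMod n) ∉ D := by
    intro z hz hzD
    have : z ∉ (U ∪ V)ᶜ := by rw [hz0]; simpa using hz
    simp only [Finset.mem_compl, not_not, Finset.mem_union, V, U, Finset.mem_image,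
      Finset.mem_filter, Finset.mem_univ, true_and] at this
    rcases this with h | ⟨w, hw, rfl⟩
    · exact absurd hzD h
    · simpa using hw
  have hz0D : z0 ∈ D := by
    have : z0 ∈ (U ∪ V)ᶜ := by rw [hz0]; simp
    simp only [Finset.mem_compl, Finset.mem_union, U,
      Finset.mem_filter, Finset.mem_univ, true_and, not_or, not_not] at this
    exact this.1
  have hne : ∀ i : ℕ, 0 < i → i < n → z0 + (i : ZMod n) * (s : ZMod n) ≠ z0 := by
    intro i h1 h2 h
    have h3 : ((i * s : ℕ) : ZMod n) = 0 := by push_cast; linear_combination h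
    rw [ZMod.natCast_eq_zero_iff] at h3
    have h4 : n ∣ i := Nat.Coprime.dvd_of_dvd_mul_right (Nat.Coprime.symm hg) h3
    exact absurd (Nat.le_of_dvd h1 h4) (by omega)
  refine ⟨z0, ?_⟩
  have step : ∀ j : ℕ, j + 1 < n → z0 + (j : ZMod n) * (s : ZMod n) ∈ D →
      z0 + ((j + 1 : ℕ) : ZMod n) * (s : ZMod n) ∉ D := by
    intro j hj h h'
    apply key _ (hne (j + 1) (by omega) hj) h'
    convert h using 1
    push_cast; ring
  intro i
  induction i with
  | zero =>
    intro h
    apply step 0 h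
    simpa using hz0D
  | succ i ih =>
    intro h
    apply step (2 * (i + 1)) h
    have := hc _ (ih (by omega))
    convert this using 1
    push_cast; ring

/-- The pattern of non-code positions, with period `2s`. -/
def auxW (s x : ℕ) : Prop :=
  (1 ≤ x % (2 * s) ∧ x % (2 * s) + 2 ≤ s) ∨ x % (2 * s) = s ∨ x % (2 * s) + 1 = 2 * s

instance (s : ℕ) : DecidablePred (auxW s) := fun x => by unfold auxW; infer_instance

theorem auxW_form (s m a : ℕ) (hm : m < 2 * s) :
    auxW s (2 * s * a + m) ↔ (1 ≤ m ∧ m + 2 ≤ s) ∨ m = s ∨ m + 1 = 2 * s := by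
  unfold auxW
  rw [Nat.mul_add_mod, Nat.mod_eq_of_lt hm]

theorem auxW_anti (s x : ℕ) (hs : 3 ≤ s) : auxW s (x + s) ↔ ¬ auxW s x := by
  have hx := Nat.div_add_mod x (2 * s)
  have hm := Nat.mod_lt x (show 0 < 2 * s by omega)
  generalize x / (2 * s) = a at *
  generalize x % (2 * s) = m at *
  subst hx
  rw [auxW_form s m a hm]
  rcases Nat.lt_or_ge m s with h | h
  · rw [add_assoc, auxW_form s (m + s) a (by omega)]; omega
  · obtain ⟨j, rfl⟩ := Nat.exists_eq_add_of_le h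
    rw [show 2 * s * a + (s + j) + s = 2 * s * (a + 1) + j by ring,
      auxW_form s j (a + 1) (by omega)]
    omega

theorem auxW_count (s P : ℕ) (hs : 3 ≤ s) : Nat.count (auxW s) (2 * s * P) = s * P := by
  have hcong : ∀ (p p' : ℕ → Prop) [DecidablePred p] [DecidablePred p'] (m : ℕ),
      (∀ x, p x ↔ p' x) → Nat.count p m = Nat.count p' m := by
    intro p p' _ _ m h
    rw [Nat.count_eq_card_filter_range, Nat.count_eq_card_filter_range]
    congr 1
    ext x; simp [h]
  have hnot : ∀ m, Nat.count (auxW s) m + Nat.count (fun x => ¬ auxW s x) m = m := by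
    intro m
    induction m with
    | zero => simp
    | succ m ih =>
      rw [Nat.count_succ, Nat.count_succ]
      by_cases h : auxW s m <;> simp [h] <;> omega
  have hbase : Nat.count (auxW s) (2 * s) = s := by
    rw [two_mul, Nat.count_add,
      hcong (fun k => auxW s (s + k)) (fun x => ¬ auxW s x) s
        (fun x => by rw [add_comm]; exact auxW_anti s x hs)]
    exact hnot s
  induction P with
  | zero => simp
  | succ P ih =>
    rw [mul_add, mul_one, Nat.count_add, ih,
      hcong (fun k => auxW s (2 * s * P + k)) (auxW s) (2 * s)
        (fun x => by unfold auxW; rw [Nat.mul_add_mod]), hbase]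
    ring

/-- The constructed code. -/
def auxD (s n e : ℕ) : Set (ZMod n) := {z | auxW s z.val → z.val = e}

theorem auxD_cast (s n e x : ℕ) (hx : x < n) :
    (x : ZMod n) ∈ auxD s n e ↔ (auxW s x → x = e) := by
  simp only [auxD, Set.mem_ofPred_eq, ZMod.val_natCast_of_lt hx]

theorem auxD_card (s n e : ℕ) (hn : 0 < n) :
    (auxD s n e).ncard + Nat.count (auxW s) n ≤ n + 1 := by
  have : NeZero n := ⟨by omega⟩
  have h1 : (auxD s n e).ncard ≤ ((Finset.range n).filter (fun x => auxW s x → x = e)).card := by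
    rw [← Set.ncard_coe_finset]
    apply Set.ncard_le_ncard_of_injOn (fun z => z.val)
    · intro z hz
      simp only [Finset.coe_filter, Finset.mem_range, Set.mem_ofPred_eq]
      exact ⟨ZMod.val_lt z, hz⟩
    · exact (ZMod.val_injective n).injOn
  have h2 : (Finset.range n).filter (fun x => auxW s x → x = e) ⊆
      insert e ((Finset.range n).filter (fun x => ¬ auxW s x)) := by
    intro x
    simp only [Finset.mem_filter, Finset.mem_insert]
    tauto
  have h3 := (Finset.card_le_card h2).trans (Finset.card_insert_le _ _)
  have h4 := Finset.card_filter_add_card_filter_not (s := Finset.range n) (auxW s)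
  rw [Finset.card_range] at h4
  have h5 : Nat.count (auxW s) n = (Finset.filter (auxW s) (Finset.range n)).card :=
    Nat.count_eq_card_filter_range _ _
  omega

theorem stmt5 (r p q k : ℕ) (hr : 1 ≤ r) (hp : 1 ≤ p)
    (hk : k = (2*r+1)*p + q) (hq : q = 0 ∨ q = 2*r)
    (hg : Nat.gcd (2*r+1) (2*k+1) = 1) :
    IsLeast {m | ∃ D : Set (ZMod (2*k+1)),
        IsIdCode (cycleG (2*k+1)) r D ∧ D.ncard = m} (k+2) := by
  have hk2 : 2 * r + 1 ≤ k := by nlinarith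
  have hn1 : 1 < 2 * k + 1 := by omega
  have : NeZero (2 * k + 1) := ⟨by omega⟩
  have lower : ∀ D : Set (ZMod (2*k+1)), IsIdCode (cycleG (2*k+1)) r D → k + 2 ≤ D.ncard := by
    intro D hD
    by_contra hlt
    obtain ⟨z0, hz0⟩ := aux_struct (2*r+1) k (2*k+1) rfl hg D (aux_cover hn1 r D hD) (by omega)
    have hself : ((2 * k + 1 : ℕ) : ZMod (2*k+1)) = 0 := ZMod.natCast_self _
    rcases hq with rfl | rfl
    · obtain ⟨p', rfl⟩ : ∃ p', p = p' + 1 := ⟨p - 1, by omega⟩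
      obtain ⟨y, hy⟩ := hD.1 (z0 + ((2 * p' + 1 : ℕ) : ZMod (2*k+1)) *
        ((2 * r + 1 : ℕ) : ZMod (2*k+1)) - (r : ZMod (2*k+1)))
      rw [aux_mem_Dr hn1] at hy
      obtain ⟨hyD, t, ht, e⟩ := hy
      obtain ⟨j, hj⟩ := Nat.exists_eq_add_of_le ht
      refine hz0 (p' + (p' + 1) * j) ?_ ?_
      · have : (p' + 1) * j ≤ (p' + 1) * (2 * r) := Nat.mul_le_mul_left _ (by omega)
        nlinarith
      · have hjc : ((2 * r : ℕ) : ZMod (2*k+1)) = ((t + j : ℕ) : ZMod (2*k+1)) := by rw [hj]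
        have hkc : (k : ZMod (2*k+1)) = (((2*r+1)*(p'+1) + 0 : ℕ) : ZMod (2*k+1)) := by rw [← hk]
        convert hyD using 1
        push_cast at *
        linear_combination (-1 : ZMod (2*k+1)) * e + (j : ZMod (2*k+1)) * hself - 2 * (j : ZMod (2*k+1)) * hkc + hjc
    · obtain ⟨y, hy⟩ := hD.1 (z0 + ((2 * r + 1 : ℕ) : ZMod (2*k+1)) + (r : ZMod (2*k+1)))
      rw [aux_mem_Dr hn1] at hy
      obtain ⟨hyD, t, ht, e⟩ := hy
      refine hz0 ((p + 1) * t) ?_ ?_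
      · have : (p + 1) * t ≤ (p + 1) * (2 * r) := Nat.mul_le_mul_left _ ht
        nlinarith
      · have hkc : (k : ZMod (2*k+1)) = (((2*r+1)*p + 2*r : ℕ) : ZMod (2*k+1)) := by rw [← hk]
        convert hyD using 1
        push_cast at *
        linear_combination (-1 : ZMod (2*k+1)) * e + (t : ZMod (2*k+1)) * hself - 2 * (t : ZMod (2*k+1)) * hkc
  refine ⟨?_, ?_⟩
  swap
  · rintro m ⟨D, hD, rfl⟩
    exact lower D hD
  -- construction
  have build : ∀ e : ℕ,
      (∀ x, x < 2*k+1 → auxW (2*r+1) x → x ≠ e → 2*k+1 ≤ x + (2*r+1) →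
        ¬ auxW (2*r+1) (x + (2*r+1) - (2*k+1)) ∨ x + (2*r+1) - (2*k+1) = e) →
      (∀ x, x < 2*k+1 → ∃ t, t ≤ 2*r ∧ x + t < 2*k+1 ∧ ¬ auxW (2*r+1) (x+t)) →
      IsIdCode (cycleG (2*k+1)) r (auxD (2*r+1) (2*k+1) e) := by
    intro e h1 h2
    apply aux_suff r (by omega)
    · intro z hz
      obtain ⟨x, hx, rfl⟩ : ∃ x : ℕ, x < 2*k+1 ∧ (x : ZMod (2*k+1)) = z :=
        ⟨z.val, ZMod.val_lt z, by simp⟩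
      rw [auxD_cast _ _ _ _ hx] at hz
      push Not at hz
      rw [← Nat.cast_add]
      rcases Nat.lt_or_ge (x + (2*r+1)) (2*k+1) with h | h
      · rw [auxD_cast _ _ _ _ h]
        intro h'
        rw [auxW_anti _ _ (by omega)] at h'
        exact absurd hz.1 h'
      · have hc : ((x + (2*r+1) : ℕ) : ZMod (2*k+1)) =
            ((x + (2*r+1) - (2*k+1) : ℕ) : ZMod (2*k+1)) := by
          rw [Nat.cast_sub h, ZMod.natCast_self, sub_zero]
        rw [hc, auxD_cast _ _ _ _ (by omega)]
        have := h1 x hx hz.1 hz.2 h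
        tauto
    · intro z
      obtain ⟨x, hx, rfl⟩ : ∃ x : ℕ, x < 2*k+1 ∧ (x : ZMod (2*k+1)) = z :=
        ⟨z.val, ZMod.val_lt z, by simp⟩
      obtain ⟨t, ht, hlt, hW⟩ := h2 x hx
      refine ⟨t, ht, ?_⟩
      rw [← Nat.cast_add, auxD_cast _ _ _ _ hlt]
      exact fun h => absurd h hW
  -- windows, given the shape of the last block
  have win : ∀ x, x < 2*k+1 →
      ∃ t, t ≤ 2*r ∧ x + t < 2*k+1 ∧ ¬ auxW (2*r+1) (x+t) := by
    intro x hx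
    have hxe := Nat.div_add_mod x (2 * (2*r+1))
    have hm := Nat.mod_lt x (show 0 < 2 * (2*r+1) by omega)
    generalize x / (2 * (2*r+1)) = a at *
    generalize x % (2 * (2*r+1)) = m at *
    subst hxe
    have hcase : (a < p) ∨ (a = p ∧ q = 0 ∧ m = 0) ∨ (a = p ∧ q = 2*r ∧ m ≤ 4*r) := by
      rcases Nat.lt_trichotomy a p with h | h | h
      · exact Or.inl h
      · subst h
        right
        rcases hq with rfl | rfl
        · left; refine ⟨rfl, rfl, ?_⟩; nlinarith
        · right; refine ⟨rfl, rfl, ?_⟩; nlinarith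
      · exfalso
        have : (2*r+1) * (p+1) ≤ (2*r+1) * a := Nat.mul_le_mul_left _ h
        rcases hq with rfl | rfl <;> nlinarith
    have hend : ∀ m', m' < 2 * (2*r+1) →
        (a < p ∨ (q = 2*r ∧ a = p ∧ m' ≤ 4*r)) → 2 * (2*r+1) * a + m' < 2*k+1 := by
      rintro m' hm' (h | ⟨h1, h2, h3⟩)
      · have : (2*r+1) * (a+1) ≤ (2*r+1) * p := Nat.mul_le_mul_left _ h
        nlinarith
      · subst h2; nlinarith
    have fin1 : ∀ t, m + t < 2 * (2*r+1) → t ≤ 2*r → 2 * (2*r+1) * a + (m + t) < 2*k+1 →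
        ¬ ((1 ≤ m + t ∧ m + t + 2 ≤ 2*r+1) ∨ m + t = 2*r+1 ∨ m + t + 1 = 2 * (2*r+1)) →
        ∃ t, t ≤ 2*r ∧ 2 * (2*r+1) * a + m + t < 2*k+1 ∧
          ¬ auxW (2*r+1) (2 * (2*r+1) * a + m + t) := by
      intro t h1 h2 h3 h4
      refine ⟨t, h2, by omega, ?_⟩
      rw [add_assoc, auxW_form _ _ _ h1]
      exact h4
    by_cases c0 : m = 0
    · exact fin1 0 (by omega) (by omega) hx (by omega)
    by_cases c1 : m ≤ 2 * r
    · exact fin1 (2*r - m) (by omega) (by omega) (hend _ (by omega) (by omega)) (by omega)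
    by_cases c2 : m = 2*r+1
    · exact fin1 1 (by omega) (by omega) (hend _ (by omega) (by omega)) (by omega)
    by_cases c3 : m ≤ 4*r
    · exact fin1 0 (by omega) (by omega) hx (by omega)
    have hm' : m = 4*r+1 := by omega
    have hap : a < p := by omega
    refine ⟨1, by omega, ?_, ?_⟩
    · have : (2*r+1) * (a+1) ≤ (2*r+1) * p := Nat.mul_le_mul_left _ hap
      nlinarith
    · rw [show 2 * (2*r+1) * a + m + 1 = 2 * (2*r+1) * (a+1) + 0 by rw [hm']; ring,
        auxW_form _ _ _ (by omega)]
      omega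
  have main : ∃ e, IsIdCode (cycleG (2*k+1)) r (auxD (2*r+1) (2*k+1) e) ∧
      (auxD (2*r+1) (2*k+1) e).ncard ≤ k + 2 := by
    rcases hq with rfl | rfl
    · refine ⟨2*k-1, build _ ?_ win, ?_⟩
      · intro x hx hW hne hge
        exfalso
        obtain ⟨p', rfl⟩ : ∃ p', p = p' + 1 := ⟨p - 1, by omega⟩
        have hkk : 2 * k = 2 * (2*r+1) * p' + 2 * (2*r+1) := by rw [hk]; ring
        rcases Nat.lt_or_ge x (2*k) with h | h
        · obtain ⟨m, rfl⟩ : ∃ m, x = 2 * (2*r+1) * p' + m := ⟨x - 2 * (2*r+1) * p', by omega⟩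
          rw [auxW_form _ _ _ (by omega)] at hW
          omega
        · have hx2 : x = 2 * (2*r+1) * (p'+1) + 0 := by rw [mul_add]; omega
          rw [hx2, auxW_form _ _ _ (by omega)] at hW
          omega
      · have h1 := auxD_card (2*r+1) (2*k+1) (2*k-1) (by omega)
        have h2 := auxW_count (2*r+1) p (by omega)
        have h3 : Nat.count (auxW (2*r+1)) (2 * (2*r+1) * p) ≤
            Nat.count (auxW (2*r+1)) (2*k+1) := Nat.count_monotone _ (by rw [hk]; nlinarith)
        rw [h2] at h3
        omega
    · have hkk : 2 * k + 1 + 1 = 2 * (2*r+1) * (p+1) := by rw [hk]; ring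
      refine ⟨1, build _ ?_ win, ?_⟩
      · intro x hx hW hne hge
        have hkk' : 2 * k + 1 + 1 = 2 * (2*r+1) * p + 2 * (2*r+1) := by rw [hk]; ring
        obtain ⟨m, rfl⟩ : ∃ m, x = 2 * (2*r+1) * p + m := ⟨x - 2 * (2*r+1) * p, by omega⟩
        rw [auxW_form _ _ _ (by omega)] at hW
        right
        omega
      · have h1 := auxD_card (2*r+1) (2*k+1) 1 (by omega)
        have h2 := auxW_count (2*r+1) (p+1) (by omega)
        rw [← hkk, Nat.count_succ] at h2
        have h3 : (2*r+1) * (p+1) = k + 1 := by rw [hk]; ring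
        split_ifs at h2 <;> omega
  obtain ⟨e, he, hcard⟩ := main
  exact ⟨_, he, le_antisymm hcard (lower _ he)⟩
end

section
/- For n ≥ 7 with n not congruent to 3 modulo 6, the minimum size of a 2-locating-dominating set of the cycle C_n is ⌈n/3⌉. -/
theorem cyc_adj (n : ℕ) (hn : 7 ≤ n) (x y : ZMod n) :
    (cycleG n).Adj x y ↔ (x = y + 1 ∨ y = x + 1) := by
  have h1 : (1 : ZMod n) ≠ 0 := by
    have : Fact (1 < n) := ⟨by omega⟩
    exact one_ne_zero
  unfold cycleG
  rw [SimpleGraph.fromRel_adj]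
  constructor
  · rintro ⟨_, h | h⟩
    · left; rw [← h]; ring
    · right; rw [← h]; ring
  · rintro (h | h)
    · refine ⟨?_, Or.inl (by rw [h]; ring)⟩
      rintro rfl
      exact h1 (by simpa using h)
    · refine ⟨?_, Or.inr (by rw [h]; ring)⟩
      rintro rfl
      exact h1 (by simpa using h)

theorem cyc_reach (n : ℕ) (hn : 7 ≤ n) (x y : ZMod n) : (cycleG n).Reachable x y := by
  have : NeZero n := ⟨by omega⟩
  have key : ∀ (t : ℕ), (cycleG n).Reachable x (x + t) := by
    intro t
    induction t with
    | zero => simp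
    | succ k ih =>
      refine ih.trans (SimpleGraph.Adj.reachable ?_)
      rw [cyc_adj n hn]
      right; push_cast; ring
  have := key (y - x).val
  simpa using this

/-- closeness in the cycle, shifted so that all offsets are natural numbers -/
def near (n : ℕ) (x z : ZMod n) : Prop := ∃ i : Fin 5, z + 2 = x + ((i : ℕ) : ZMod n)

instance (n : ℕ) (x z : ZMod n) : Decidable (near n x z) := by
  unfold near; infer_instance

theorem near_iff (n : ℕ) (x z : ZMod n) : near n x z ↔
    (z + 2 = x ∨ z + 2 = x + 1 ∨ z + 2 = x + 2 ∨ z + 2 = x + 3 ∨ z + 2 = x + 4) := by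
  unfold near
  have e2 : (1 + 1 : ZMod n) = 2 := by norm_num
  have e3 : (2 + 1 : ZMod n) = 3 := by norm_num
  have e4 : (3 + 1 : ZMod n) = 4 := by norm_num
  simp [Fin.exists_fin_succ, e2, e3, e4]

theorem cyc_dist (n : ℕ) (hn : 7 ≤ n) (x z : ZMod n) :
    (cycleG n).dist x z ≤ 2 ↔ near n x z := by
  rw [near_iff]
  constructor
  · intro h
    obtain ⟨p, hp⟩ := (cyc_reach n hn x z).exists_walk_length_eq_dist
    rw [← hp] at h
    match p, h with
    | .nil, _ => right; right; left; rfl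
    | .cons h1 .nil, _ =>
      rw [cyc_adj n hn] at h1
      rcases h1 with h1 | h1 <;> grind
    | .cons h1 (.cons h2 .nil), _ =>
      rw [cyc_adj n hn] at h1 h2
      rcases h1 with h1 | h1 <;> rcases h2 with h2 | h2 <;> grind
    | .cons h1 (.cons h2 (.cons h3 q)), h => simp at h
  · have one : ∀ a : ZMod n, (cycleG n).Adj a (a + 1) := fun a => by
      rw [cyc_adj n hn]; right; rfl
    rintro (h | h | h | h | h)
    · subst h
      have e : z + 1 + 1 = z + 2 := by ring
      have h2 := one (z + 1)
      rw [e] at h2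
      exact SimpleGraph.dist_le (.cons h2.symm (.cons (one z).symm .nil))
    · have e : x = z + 1 := by grind
      subst e
      exact (SimpleGraph.dist_le (.cons (one z).symm .nil)).trans (by simp)
    · have e : x = z := by grind
      subst e
      simp
    · have e : z = x + 1 := by grind
      subst e
      exact (SimpleGraph.dist_le (.cons (one x) .nil)).trans (by simp)
    · have e : z = x + 1 + 1 := by grind
      subst e
      exact SimpleGraph.dist_le (.cons (one x) (.cons (one _) .nil))

theorem mem_Dr (n : ℕ) (hn : 7 ≤ n) (D : Set (ZMod n)) (x z : ZMod n) :
    z ∈ Dr (cycleG n) 2 D x ↔ z ∈ D ∧ near n x z := by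
  rw [← cyc_dist n hn]; rfl

/-- lower bound -/
theorem lower (n : ℕ) (hn : 7 ≤ n) (D : Set (ZMod n)) (h : IsLD (cycleG n) 2 D) :
    n ≤ 3 * D.ncard := by
  classical
  have : NeZero n := ⟨by omega⟩
  obtain ⟨hd, hl⟩ := h
  have hne : D.Nonempty := by
    by_cases h0 : (0 : ZMod n) ∈ D
    · exact ⟨0, h0⟩
    · obtain ⟨d, hd'⟩ := hd 0 h0
      exact ⟨d, hd'.1⟩
  obtain ⟨d, hdD⟩ := hne
  let ev : ZMod n → Prop := fun y => y - 2 ∈ D ∨ y + 3 ∈ D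
  have hex : ∀ x : ZMod n, ∃ t : ℕ, ev (x + t) := by
    intro x
    refine ⟨(d + 2 - x).val, Or.inl ?_⟩
    simpa using hdD
  have step : ∀ y : ZMod n, ¬ ev y → Dr (cycleG n) 2 D y = Dr (cycleG n) 2 D (y + 1) := by
    intro y hy
    have hy1 : y - 2 ∉ D := fun h => hy (Or.inl h)
    have hy2 : y + 3 ∉ D := fun h => hy (Or.inr h)
    ext z
    rw [mem_Dr n hn, mem_Dr n hn, near_iff, near_iff]
    have a1 : z ∈ D → z + 2 ≠ y := fun hz e => hy1 (by rw [← e]; simpa using hz)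
    have a2 : z ∈ D → z + 2 ≠ y + 1 + 4 := fun hz e => hy2 (by
      have : z = y + 3 := by grind
      rwa [← this])
    have e1 : y + 1 + 1 = y + 2 := by ring
    have e2 : y + 1 + 2 = y + 3 := by ring
    have e3 : y + 1 + 3 = y + 4 := by ring
    rw [e1, e2, e3]
    tauto
  let g : ZMod n → ZMod n := fun x => x + (Nat.find (hex x) : ℕ)
  have run : ∀ x : ZMod n, ∀ s : ℕ, s ≤ Nat.find (hex x) →
      Dr (cycleG n) 2 D x = Dr (cycleG n) 2 D (x + s) := by
    intro x s
    induction s with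
    | zero => intro _; simp
    | succ k ih =>
      intro hk
      rw [ih (by omega), step _ (Nat.find_min (hex x) (by omega))]
      congr 1; push_cast; ring
  have half : ∀ x ∉ D, ∀ y ∉ D, g x = g y → Nat.find (hex x) ≤ Nat.find (hex y) → x = y := by
    intro x hx y hy hg hle
    by_contra hxy
    apply hl x hx y hy hxy
    rw [run y (Nat.find (hex y) - Nat.find (hex x)) (by omega)]
    congr 1
    rw [Nat.cast_sub hle]
    have hg' : x + (Nat.find (hex x) : ℕ) = y + (Nat.find (hex y) : ℕ) := hg
    linear_combination hg'
  have inj : Set.InjOn g Dᶜ := by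
    intro x hx y hy hg
    rcases le_total (Nat.find (hex x)) (Nat.find (hex y)) with hle | hle
    · exact half x hx y hy hg hle
    · exact (half y hy x hx hg.symm hle).symm
  have maps : Set.image g Dᶜ ⊆ Set.image (fun a => a + 2) D ∪ Set.image (fun a => a - 3) D := by
    rintro _ ⟨x, _, rfl⟩
    rcases Nat.find_spec (hex x) with h | h
    · left; exact ⟨_, h, by simp [g]⟩
    · right; exact ⟨_, h, by simp [g]⟩
  have c1 : (Dᶜ).ncard ≤ D.ncard + D.ncard := by
    rw [← Set.ncard_image_of_injOn inj]
    refine (Set.ncard_le_ncard maps (Set.toFinite _)).trans ?_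
    refine (Set.ncard_union_le _ _).trans ?_
    exact Nat.add_le_add (Set.ncard_image_le (Set.toFinite _)) (Set.ncard_image_le (Set.toFinite _))
  have c2 := Set.ncard_add_ncard_compl D
  rw [Nat.card_zmod] at c2
  omega

theorem near_cast (n : ℕ) (hn : 9 ≤ n) (u : ZMod n) (a b : ℕ) (ha : a ≤ 8) (hb : b ≤ 4) :
    near n (u + 2 + (b : ℕ)) (u + (a : ℕ)) ↔ (b ≤ a ∧ a ≤ b + 4) := by
  unfold near
  constructor
  · rintro ⟨i, hi⟩
    have hi4 := i.2
    have : ((a : ℕ) : ZMod n) = ((b + i : ℕ) : ZMod n) := by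
      push_cast; linear_combination hi
    rw [ZMod.natCast_eq_natCast_iff', Nat.mod_eq_of_lt (by omega), Nat.mod_eq_of_lt (by omega)]
      at this
    omega
  · rintro ⟨h1, h2⟩
    refine ⟨⟨a - b, by omega⟩, ?_⟩
    simp only [Nat.cast_sub h1]
    ring

theorem crit (n : ℕ) (hn : 9 ≤ n) (D : Set (ZMod n))
    (h0 : ∀ u : ZMod n, u + (2 : ℕ) ∉ D → ∃ a : ℕ, a ≤ 4 ∧ u + (a : ℕ) ∈ D)
    (h1 : ∀ u : ZMod n, ∀ b : ℕ, 1 ≤ b → b ≤ 4 → u + (2 : ℕ) ∉ D → u + ((2 + b : ℕ) : ZMod n) ∉ D →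
      ∃ a : ℕ, a ≤ 8 ∧ u + (a : ℕ) ∈ D ∧ ¬ (a ≤ 4 ↔ (b ≤ a ∧ a ≤ b + 4))) :
    IsLD (cycleG n) 2 D := by
  have hn7 : 7 ≤ n := by omega
  have dom : ∀ x ∉ D, (Dr (cycleG n) 2 D x).Nonempty := by
    intro x hx
    obtain ⟨a, ha, hm⟩ := h0 (x - 2) (by simpa using hx)
    refine ⟨_, (mem_Dr n hn7 _ _ _).2 ⟨hm, ⟨a, by omega⟩, ?_⟩⟩
    simp only []
    ring
  have half : ∀ x ∉ D, ∀ y ∉ D, ∀ b : ℕ, 1 ≤ b → b ≤ 4 → y = x + (b : ℕ) →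
      Dr (cycleG n) 2 D x ≠ Dr (cycleG n) 2 D y := by
    intro x hx y hy b hb1 hb4 hyx he
    obtain ⟨a, ha, hm, hna⟩ := h1 (x - 2) b hb1 hb4 (by simpa using hx) (by
      have : x - 2 + ((2 + b : ℕ) : ZMod n) = y := by rw [hyx]; push_cast; ring
      rwa [this])
    have e1 := near_cast n hn (x - 2) a 0 ha (by omega)
    have e2 := near_cast n hn (x - 2) a b ha hb4
    have e := Set.ext_iff.1 he (x - 2 + (a : ℕ))
    rw [mem_Dr n hn7, mem_Dr n hn7] at e
    simp only [sub_add_cancel, Nat.cast_zero, add_zero, zero_le, true_and, zero_add] at e1 e2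
    rw [← hyx] at e2
    tauto
  refine ⟨dom, ?_⟩
  intro x hx y hy hxy he
  obtain ⟨d, hd⟩ := dom x hx
  have hd' := hd
  rw [he] at hd'
  obtain ⟨_, i, hi⟩ := (mem_Dr n hn7 _ _ _).1 hd
  obtain ⟨_, j, hj⟩ := (mem_Dr n hn7 _ _ _).1 hd'
  have hi4 := i.2
  have hj4 := j.2
  rcases lt_trichotomy (i : ℕ) (j : ℕ) with hij | hij | hij
  · refine half y hy x hx (j - i) (by omega) (by omega) ?_ he.symm
    rw [Nat.cast_sub hij.le]
    linear_combination hj - hi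
  · rw [hi, hij] at hj
    exact hxy (add_right_cancel hj)
  · refine half x hx y hy (i - j) (by omega) (by omega) ?_ he
    rw [Nat.cast_sub hij.le]
    linear_combination hi - hj

theorem val_add_small (n : ℕ) (hn : 9 ≤ n) (u : ZMod n) (a : ℕ) (ha : a ≤ 8) :
    (u + (a : ℕ)).val = if u.val + a < n then u.val + a else u.val + a - n := by
  have : NeZero n := ⟨by omega⟩
  have hu := ZMod.val_lt u
  rw [ZMod.val_add, ZMod.val_natCast, Nat.mod_eq_of_lt (show a < n by omega)]
  split_ifs with h
  · exact Nat.mod_eq_of_lt h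
  · rw [Nat.mod_eq_sub_mod (by omega), Nat.mod_eq_of_lt (by omega)]

/-- criterion in terms of representatives -/
theorem crit_nat (n : ℕ) (hn : 9 ≤ n) (P : ℕ → Prop)
    (h0 : ∀ u < n, ∀ Q : ℕ → Prop,
      (∀ a ≤ 8, Q a ↔ P (if u + a < n then u + a else u + a - n)) →
      (Q 0 ∨ Q 1 ∨ Q 2 ∨ Q 3 ∨ Q 4) ∧
      (Q 2 ∨ Q 3 ∨ Q 0 ∨ Q 5) ∧
      (Q 2 ∨ Q 4 ∨ Q 0 ∨ Q 1 ∨ Q 5 ∨ Q 6) ∧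
      (Q 2 ∨ Q 5 ∨ Q 0 ∨ Q 1 ∨ Q 6 ∨ Q 7) ∧
      (Q 2 ∨ Q 6 ∨ Q 0 ∨ Q 1 ∨ Q 3 ∨ Q 5 ∨ Q 7 ∨ Q 8)) :
    IsLD (cycleG n) 2 {x : ZMod n | P x.val} := by
  have : NeZero n := ⟨by omega⟩
  have key : ∀ u : ZMod n, ∀ a ≤ 8, (u + (a : ℕ)) ∈ {x : ZMod n | P x.val} ↔
      P (if u.val + a < n then u.val + a else u.val + a - n) := by
    intro u a ha
    rw [Set.mem_ofPred_eq, val_add_small n hn u a ha]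
  apply crit n hn
  · intro u h2
    obtain ⟨h, -⟩ := h0 u.val (ZMod.val_lt u) (fun a => (u + (a : ℕ)) ∈ {x : ZMod n | P x.val})
      (key u)
    rcases h with h | h | h | h | h
    exacts [⟨0, by omega, h⟩, ⟨1, by omega, h⟩, ⟨2, by omega, h⟩, ⟨3, by omega, h⟩,
      ⟨4, by omega, h⟩]
  · intro u b hb1 hb4 h2 h2b
    obtain ⟨-, k1, k2, k3, k4⟩ := h0 u.val (ZMod.val_lt u)
      (fun a => (u + (a : ℕ)) ∈ {x : ZMod n | P x.val}) (key u)
    interval_cases b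
    · rcases k1 with h | h | h | h
      exacts [absurd h h2, absurd h h2b, ⟨0, by omega, h, by omega⟩, ⟨5, by omega, h, by omega⟩]
    · rcases k2 with h | h | h | h | h | h
      exacts [absurd h h2, absurd h h2b, ⟨0, by omega, h, by omega⟩, ⟨1, by omega, h, by omega⟩,
        ⟨5, by omega, h, by omega⟩, ⟨6, by omega, h, by omega⟩]
    · rcases k3 with h | h | h | h | h | h
      exacts [absurd h h2, absurd h h2b, ⟨0, by omega, h, by omega⟩, ⟨1, by omega, h, by omega⟩,
        ⟨6, by omega, h, by omega⟩, ⟨7, by omega, h, by omega⟩]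
    · rcases k4 with h | h | h | h | h | h | h | h
      exacts [absurd h h2, absurd h h2b, ⟨0, by omega, h, by omega⟩, ⟨1, by omega, h, by omega⟩,
        ⟨3, by omega, h, by omega⟩, ⟨5, by omega, h, by omega⟩,
        ⟨7, by omega, h, by omega⟩, ⟨8, by omega, h, by omega⟩]

theorem card_bound (n m : ℕ) (hn : 7 ≤ n) (P : ℕ → Prop) (f : ℕ → ℕ)
    (h : ∀ v < n, P v → ∃ j < m, f j = v) :
    ({x : ZMod n | P x.val} : Set (ZMod n)).ncard ≤ m := by
  classical
  have : NeZero n := ⟨by omega⟩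
  have hs : ({x : ZMod n | P x.val} : Set (ZMod n)) ⊆
      ((Finset.range m).image (fun j => ((f j : ℕ) : ZMod n)) : Finset (ZMod n)) := by
    intro x hx
    obtain ⟨j, hj, hfj⟩ := h x.val (ZMod.val_lt x) hx
    rw [Finset.mem_coe, Finset.mem_image]
    exact ⟨j, Finset.mem_range.2 hj, by simp [hfj]⟩
  refine (Set.ncard_le_ncard hs (Set.toFinite _)).trans ?_
  rw [Set.ncard_coe_finset]
  exact Finset.card_image_le.trans (by simp)

theorem upper_main (n : ℕ) (hn : 9 ≤ n) (h3 : n % 6 ≠ 3) (h5 : n % 6 ≠ 5) :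
    ∃ D : Set (ZMod n), IsLD (cycleG n) 2 D ∧ D.ncard ≤ (n + 2) / 3 := by
  refine ⟨{x : ZMod n | x.val % 6 = 0 ∨ x.val % 6 = 2}, ?_, ?_⟩
  · apply crit_nat n hn (fun v => v % 6 = 0 ∨ v % 6 = 2)
    intro u hu Q hQ
    simp only [hQ 0 (by omega), hQ 1 (by omega), hQ 2 (by omega), hQ 3 (by omega), hQ 4 (by omega),
      hQ 5 (by omega), hQ 6 (by omega), hQ 7 (by omega), hQ 8 (by omega)]
    clear hQ
    by_cases hb : u + 8 < n
    · rw [if_pos (show u + 0 < n by omega), if_pos (show u + 1 < n by omega),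
        if_pos (show u + 2 < n by omega), if_pos (show u + 3 < n by omega),
        if_pos (show u + 4 < n by omega), if_pos (show u + 5 < n by omega),
        if_pos (show u + 6 < n by omega), if_pos (show u + 7 < n by omega),
        if_pos (show u + 8 < n by omega)]
      refine ⟨?_, ?_, ?_, ?_, ?_⟩ <;> omega
    · obtain ⟨j, rfl⟩ : ∃ j, n = u + j := ⟨n - u, by omega⟩
      have hj1 : 1 ≤ j := by omega
      have hj2 : j ≤ 8 := by omega
      clear hb hu
      interval_cases j <;>
        simp only [Nat.add_lt_add_iff_left, Nat.add_sub_add_left, Nat.reduceLT, Nat.reduceSub,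
          Nat.lt_irrefl, true_or, or_true, ↓reduceIte] <;>
        refine ⟨?_, ?_, ?_, ?_, ?_⟩ <;> first | trivial | omega |
          (simp only [and_true, true_and, true_or, or_true, Nat.add_eq_left, Nat.add_left_cancel_iff] <;> omega)
  · apply card_bound n _ (by omega) (fun v => v % 6 = 0 ∨ v % 6 = 2)
      (fun j => 6 * (j / 2) + 2 * (j % 2))
    intro v hv h
    refine ⟨2 * (v / 6) + (v % 6) / 2, ?_, ?_⟩ <;> omega

theorem upper_five (n : ℕ) (hn : 9 ≤ n) (h5 : n % 6 = 5) :
    ∃ D : Set (ZMod n), IsLD (cycleG n) 2 D ∧ D.ncard ≤ (n + 2) / 3 := by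
  let P : ℕ → Prop := fun v => (v + 11 < n ∧ (v % 6 = 0 ∨ v % 6 = 2)) ∨ v + 11 = n ∨ v + 8 = n ∨
    v + 7 = n ∨ v + 4 = n
  refine ⟨{x : ZMod n | P x.val}, ?_, ?_⟩
  · apply crit_nat n hn P
    intro u hu Q hQ
    simp only [hQ 0 (by omega), hQ 1 (by omega), hQ 2 (by omega), hQ 3 (by omega), hQ 4 (by omega),
      hQ 5 (by omega), hQ 6 (by omega), hQ 7 (by omega), hQ 8 (by omega), P]
    clear hQ
    by_cases hb : u + 8 < n
    · rw [if_pos (show u + 0 < n by omega), if_pos (show u + 1 < n by omega),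
        if_pos (show u + 2 < n by omega), if_pos (show u + 3 < n by omega),
        if_pos (show u + 4 < n by omega), if_pos (show u + 5 < n by omega),
        if_pos (show u + 6 < n by omega), if_pos (show u + 7 < n by omega),
        if_pos (show u + 8 < n by omega)]
      refine ⟨?_, ?_, ?_, ?_, ?_⟩ <;> omega
    · obtain ⟨j, rfl⟩ : ∃ j, n = u + j := ⟨n - u, by omega⟩
      have hj1 : 1 ≤ j := by omega
      have hj2 : j ≤ 8 := by omega
      clear hb hu
      interval_cases j <;>
        simp only [Nat.add_lt_add_iff_left, Nat.add_sub_add_left, Nat.reduceLT, Nat.reduceSub,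
          Nat.lt_irrefl, true_or, or_true, ↓reduceIte] <;>
        refine ⟨?_, ?_, ?_, ?_, ?_⟩ <;> first | trivial | omega |
          (simp only [and_true, true_and, true_or, or_true, Nat.add_eq_left, Nat.add_left_cancel_iff] <;> omega)
  · apply card_bound n _ (by omega) P
      (fun j => if j + 4 < (n + 2) / 3 then 6 * (j / 2) + 2 * (j % 2) else
        if j + 4 = (n + 2) / 3 then n - 11 else if j + 3 = (n + 2) / 3 then n - 8 else
        if j + 2 = (n + 2) / 3 then n - 7 else n - 4)
    rintro v hv (⟨h1, h2⟩ | h | h | h | h)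
    · refine ⟨2 * (v / 6) + (v % 6) / 2, ?_, ?_⟩
      · omega
      · rw [if_pos (by omega)]; omega
    · refine ⟨(n + 2) / 3 - 4, by omega, ?_⟩
      split_ifs <;> omega
    · refine ⟨(n + 2) / 3 - 3, by omega, ?_⟩
      split_ifs <;> omega
    · refine ⟨(n + 2) / 3 - 2, by omega, ?_⟩
      split_ifs <;> omega
    · refine ⟨(n + 2) / 3 - 1, by omega, ?_⟩
      split_ifs <;> omega

theorem crit_small (n : ℕ) (hn : 7 ≤ n) (S : Finset (ZMod n))
    (h0 : ∀ x, x ∉ S → ∃ z ∈ S, near n x z)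
    (h1 : ∀ x, x ∉ S → ∀ y, y ∉ S → x ≠ y → ∃ z ∈ S, ¬ (near n x z ↔ near n y z)) :
    IsLD (cycleG n) 2 (S : Set (ZMod n)) := by
  constructor
  · intro x hx
    obtain ⟨z, hz, hn'⟩ := h0 x hx
    exact ⟨z, (mem_Dr n hn _ _ _).2 ⟨hz, hn'⟩⟩
  · intro x hx y hy hxy he
    obtain ⟨z, hz, hn'⟩ := h1 x hx y hy hxy
    have e := Set.ext_iff.1 he z
    rw [mem_Dr n hn, mem_Dr n hn] at e
    have hz' : z ∈ (S : Set (ZMod n)) := hz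
    tauto

theorem upper (n : ℕ) (hn : 7 ≤ n) (h3 : n % 6 ≠ 3) :
    ∃ D : Set (ZMod n), IsLD (cycleG n) 2 D ∧ D.ncard ≤ (n + 2) / 3 := by
  by_cases h9 : 9 ≤ n
  · by_cases h5 : n % 6 = 5
    · exact upper_five n h9 h5
    · exact upper_main n h9 h3 h5
  · obtain rfl | rfl : n = 7 ∨ n = 8 := by omega
    · refine ⟨(({0, 2, 6} : Finset (ZMod 7)) : Set (ZMod 7)), crit_small 7 hn _ ?_ ?_, ?_⟩
      · decide
      · decide
      · rw [Set.ncard_coe_finset]; decide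
    · refine ⟨(({0, 2, 6} : Finset (ZMod 8)) : Set (ZMod 8)), crit_small 8 hn _ ?_ ?_, ?_⟩
      · decide
      · decide
      · rw [Set.ncard_coe_finset]; decide

theorem stmt19 (n : ℕ) (hn : 7 ≤ n) (h3 : n % 6 ≠ 3) :
    IsLeast {m | ∃ D : Set (ZMod n),
        IsLD (cycleG n) 2 D ∧ D.ncard = m} ((n + 2) / 3) := by
  constructor
  · obtain ⟨D, hD, hc⟩ := upper n hn h3
    have := lower n hn D hD
    exact ⟨D, hD, by omega⟩
  · rintro m ⟨D, hD, rfl⟩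
    have := lower n hn D hD
    omega
end
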